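/- arXiv:2012.08766 — 3 statements merged into one kernel-verified Lean document; each statement's English description precedes it below -/
import Mathlib

section
/- Let 1<p<∞, μ>0 and η>0. Then for every u ∈ C_c^1((0,η]) one has ∫_0^η |u'(t)|^p e^{-(p-1)/t} dt + Λ_p^{1/p'} μ^{1-p} |u(η)|^p ≥ Λ_p ∫_0^η |u(t)|^p e^{-(p-1)/t} / ( e^{-1/t} ( ∫_t^η e^{1/s} ds + μ ) )^p dt. -/
open MeasureTheory Set

/-!
For a weight `w > 0` let `h > 0` solve the Riccati equation `h' = p / (p - 1) * w * h ^ 2`. Young's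
inequality bounds the derivative of `‖u‖ ^ p * h ^ (p - 1)` from below by
`w * (h * ‖u‖) ^ p - ‖u'‖ ^ p * w ^ (1 - p)`; integrating leaves a nonnegative term at the left
endpoint, which is dropped, and the left endpoint may then tend to a singularity of the weight.
The Hardy inequality is the case `h = (1 - 1 / p) / F`, where `F' = -w`; here `w t = exp (1 / t)`.
-/

open Filter Topology

section Pointwise

theorem mul_mul_rpow_sub_one_le_add {p w x y : ℝ} (hp : 1 < p) (hw : 0 < w) (hx : 0 ≤ x)
    (hy : 0 ≤ y) : p * (x * y ^ (p - 1)) ≤ x ^ p * w ^ (1 - p) + (p - 1) * (w * y ^ p) := by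
  have hp1 : p - 1 ≠ 0 := by linarith
  have young := Real.young_inequality_of_nonneg (div_nonneg hx hw.le)
    (Real.rpow_nonneg hy (p - 1)) (Real.HolderConjugate.conjExponent hp)
  rw [Real.conjExponent, ← Real.rpow_mul hy, mul_div_cancel₀ _ hp1] at young
  calc p * (x * y ^ (p - 1)) = w * p * (x / w * y ^ (p - 1)) := by field_simp
    _ ≤ w * p * ((x / w) ^ p / p + y ^ p / (p / (p - 1))) := by gcongr
    _ = x ^ p * (w / w ^ p) + (p - 1) * (w * y ^ p) := by
      rw [Real.div_rpow hx hw.le]; field_simp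
    _ = x ^ p * w ^ (1 - p) + (p - 1) * (w * y ^ p) := by
      rw [Real.rpow_sub hw, Real.rpow_one]

theorem hasDerivAt_const_div_riccati {p w t : ℝ} {F : ℝ → ℝ} (hp : p ≠ 0)
    (hF : HasDerivAt F (-w) t) (hFt : F t ≠ 0) :
    HasDerivAt (fun s => (1 - 1 / p) / F s) (p / (p - 1) * w * ((1 - 1 / p) / F t) ^ 2) t := by
  refine ((hasDerivAt_const t (1 - 1 / p)).fun_div hF hFt).congr_deriv ?_
  field_simp
  ring

variable {E : Type*} [NormedAddCommGroup E] [InnerProductSpace ℝ E]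

theorem abs_mul_norm_rpow_mul_inner_le {p : ℝ} (hp : 1 < p) (v v' : E) :
    |p * ‖v‖ ^ (p - 2) * inner ℝ v v'| ≤ p * (‖v'‖ * ‖v‖ ^ (p - 1)) := by
  have hpow : ‖v‖ ^ (p - 1) = ‖v‖ ^ (p - 2) * ‖v‖ := by
    rw [← Real.rpow_add_one' (norm_nonneg v) (by linarith)]
    ring_nf
  calc |p * ‖v‖ ^ (p - 2) * inner ℝ v v'| = p * ‖v‖ ^ (p - 2) * |inner ℝ v v'| := by
        rw [abs_mul, abs_of_nonneg (by positivity)]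
    _ ≤ p * ‖v‖ ^ (p - 2) * (‖v‖ * ‖v'‖) := by gcongr; exact abs_real_inner_le_norm v v'
    _ = p * (‖v'‖ * ‖v‖ ^ (p - 1)) := by rw [hpow]; ring

theorem hasDerivAt_norm_rpow_mul_rpow {p t h' : ℝ} {u : ℝ → E} {u' : E} {h : ℝ → ℝ} (hp : 1 < p)
    (hu : HasDerivAt u u' t) (hh : HasDerivAt h h' t) (hht : h t ≠ 0) :
    HasDerivAt (fun s => ‖u s‖ ^ p * h s ^ (p - 1))
      (p * ‖u t‖ ^ (p - 2) * inner ℝ (u t) u' * h t ^ (p - 1)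
        + ‖u t‖ ^ p * (h' * (p - 1) * h t ^ (p - 1 - 1))) t :=
  ((hasFDerivAt_norm_rpow (u t) hp).comp_hasDerivAt t hu).mul (hh.rpow_const (.inl hht))

theorem riccati_pointwise_le {p w h : ℝ} (hp : 1 < p) (hw : 0 < w) (hh : 0 < h) (v v' : E) :
    w * (h * ‖v‖) ^ p - ‖v'‖ ^ p * w ^ (1 - p) ≤
      p * ‖v‖ ^ (p - 2) * inner ℝ v v' * h ^ (p - 1)
        + ‖v‖ ^ p * (p / (p - 1) * w * h ^ 2 * (p - 1) * h ^ (p - 1 - 1)) := by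
  have hp1 : p - 1 ≠ 0 := by linarith
  have young := mul_mul_rpow_sub_one_le_add hp hw (norm_nonneg v')
    (mul_nonneg hh.le (norm_nonneg v))
  have hinner : -(p * (‖v'‖ * (h * ‖v‖) ^ (p - 1))) ≤
      p * ‖v‖ ^ (p - 2) * inner ℝ v v' * h ^ (p - 1) :=
    calc -(p * (‖v'‖ * (h * ‖v‖) ^ (p - 1))) = -(p * (‖v'‖ * ‖v‖ ^ (p - 1))) * h ^ (p - 1) := by
          rw [Real.mul_rpow hh.le (norm_nonneg v)]; ring
      _ ≤ p * ‖v‖ ^ (p - 2) * inner ℝ v v' * h ^ (p - 1) := by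
          gcongr
          exact neg_le_of_abs_le (abs_mul_norm_rpow_mul_inner_le hp v v')
  have hriccati : ‖v‖ ^ p * (p / (p - 1) * w * h ^ 2 * (p - 1) * h ^ (p - 1 - 1)) =
      p * (w * (h * ‖v‖) ^ p) := by
    have hpow : h ^ p = h ^ 2 * h ^ (p - 1 - 1) := by
      rw [← Real.rpow_natCast, ← Real.rpow_add hh]
      norm_num
      ring_nf
    rw [Real.mul_rpow hh.le (norm_nonneg v), hpow]
    field_simp
  linarith

end Pointwise

section Integration

theorem intervalIntegrable_and_integral_le_of_forall_Ioo {f : ℝ → ℝ} {a b C : ℝ} (hab : a < b)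
    (hf0 : ∀ t ∈ Ioc a b, 0 ≤ f t) (hf : ∀ x ∈ Ioo a b, IntervalIntegrable f volume x b)
    (hC : ∀ x ∈ Ioo a b, ∫ t in x..b, f t ≤ C) :
    IntervalIntegrable f volume a b ∧ ∫ t in a..b, f t ≤ C := by
  obtain ⟨x, -, hx, hxa⟩ := exists_seq_strictAnti_tendsto' hab
  have hint : IntervalIntegrable f volume a b := by
    rw [intervalIntegrable_iff_integrableOn_Ioc_of_le hab.le]
    refine integrableOn_Ioc_of_intervalIntegral_norm_bounded_left (I := C) (fun n =>
      (intervalIntegrable_iff_integrableOn_Ioc_of_le (hx n).2.le).mp (hf _ (hx n))) hxa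
      (.of_forall fun n => ?_)
    calc ∫ t in Ioc (x n) b, ‖f t‖ = ∫ t in Ioc (x n) b, f t :=
          setIntegral_congr_fun measurableSet_Ioc fun t ht =>
            Real.norm_of_nonneg (hf0 t ⟨(hx n).1.trans ht.1, ht.2⟩)
      _ = ∫ t in (x n)..b, f t := (intervalIntegral.integral_of_le (hx n).2.le).symm
      _ ≤ C := hC _ (hx n)
  have hcont : ContinuousOn (fun y => ∫ t in y..b, f t) (uIcc a b) :=
    intervalIntegral.continuousOn_primitive_interval_left (by
      rwa [uIcc_of_le hab.le, ← intervalIntegrable_iff_integrableOn_Icc_of_le hab.le])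
  have htendsto : Tendsto (fun n => ∫ t in (x n)..b, f t) atTop (𝓝 (∫ t in a..b, f t)) :=
    (hcont a left_mem_uIcc).tendsto.comp (tendsto_nhdsWithin_iff.mpr
      ⟨hxa, .of_forall fun n => Icc_subset_uIcc (Ioo_subset_Icc_self (hx n))⟩)
  exact ⟨hint, le_of_tendsto' htendsto fun n => hC _ (hx n)⟩

variable {E : Type*} [NormedAddCommGroup E]

theorem intervalIntegrable_of_continuousOn_Ioc_of_eq_zero {f : ℝ → E} {a b c : ℝ} (hab : a ≤ b)
    (hac : a < c) (hf : ContinuousOn f (Ioc a b)) (hf0 : ∀ t ∈ Ioc a b, t ≤ c → f t = 0) :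
    IntervalIntegrable f volume a b := by
  rw [intervalIntegrable_iff_integrableOn_Ioc_of_le hab]
  have hleft : IntegrableOn f (Ioc a b ∩ Iic c) :=
    integrableOn_zero.congr_fun (fun t ht => (hf0 t ht.1 ht.2).symm)
      (measurableSet_Ioc.inter measurableSet_Iic)
  have hright : IntegrableOn f (Icc c b) :=
    (hf.mono fun t ht => ⟨hac.trans_le ht.1, ht.2⟩).integrableOn_Icc
  refine (hleft.union hright).mono_set fun t ht => ?_
  exact (le_total t c).imp (fun h => ⟨ht, h⟩) fun h => ⟨h, ht.2⟩

variable [NormedSpace ℝ E]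

theorem hasDerivWithinAt_Ioc_eq_zero {u : ℝ → E} {v : E} {a b t : ℝ} (ht : t ∈ Ioc a b)
    (hu : HasDerivWithinAt u v (Ioc a b) t) (hu0 : ∀ s ∈ Ioc a t, u s = 0) : v = 0 := by
  have hmem : t ∈ Ioc a t := ⟨ht.1, le_rfl⟩
  have hzero : HasDerivWithinAt u 0 (Ioc a t) t :=
    (hasDerivWithinAt_const t (Ioc a t) (0 : E)).congr hu0 (hu0 t hmem)
  exact (uniqueDiffOn_Ioc a t t hmem).eq_deriv _ (hu.mono (Ioc_subset_Ioc_right ht.2)) hzero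

theorem intervalIntegrable_norm_deriv_rpow_mul {u u' : ℝ → E} {ρ : ℝ → ℝ} {p a b c : ℝ}
    (hp : 0 < p) (hab : a ≤ b) (hac : a < c)
    (hu : ∀ t ∈ Ioc a b, HasDerivWithinAt u (u' t) (Ioc a b) t)
    (hu' : ContinuousOn u' (Ioc a b)) (hρ : ContinuousOn ρ (Ioc a b))
    (hu0 : ∀ t ∈ Ioc a c, u t = 0) :
    IntervalIntegrable (fun t => ‖u' t‖ ^ p * ρ t) volume a b := by
  refine intervalIntegrable_of_continuousOn_Ioc_of_eq_zero hab hac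
    ((hu'.norm.rpow_const fun _ _ => .inr hp.le).mul hρ) fun t ht htc => ?_
  have hu't : u' t = 0 :=
    hasDerivWithinAt_Ioc_eq_zero ht (hu t ht) fun s hs => hu0 s ⟨hs.1, hs.2.trans htc⟩
  rw [hu't, norm_zero, Real.zero_rpow hp.ne', zero_mul]

end Integration

section Hardy

variable {E : Type*} [NormedAddCommGroup E] [InnerProductSpace ℝ E]
  {p a b : ℝ} {u u' : ℝ → E} {w h F : ℝ → ℝ}

theorem integral_riccati_le (hp : 1 < p) (hab : a ≤ b)
    (hu : ContinuousOn u (Icc a b)) (hud : ∀ t ∈ Ioo a b, HasDerivAt u (u' t) t)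
    (hw : ContinuousOn w (Icc a b)) (hw0 : ∀ t ∈ Icc a b, 0 < w t)
    (hh : ContinuousOn h (Icc a b)) (hh0 : ∀ t ∈ Icc a b, 0 < h t)
    (hhd : ∀ t ∈ Ioo a b, HasDerivAt h (p / (p - 1) * w t * h t ^ 2) t)
    (henergy : IntervalIntegrable (fun t => ‖u' t‖ ^ p * w t ^ (1 - p)) volume a b) :
    ∫ t in a..b, w t * (h t * ‖u t‖) ^ p ≤
      (∫ t in a..b, ‖u' t‖ ^ p * w t ^ (1 - p)) + ‖u b‖ ^ p * h b ^ (p - 1) := by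
  have hp0 : 0 ≤ p := by linarith
  have hdensity : IntervalIntegrable (fun t => w t * (h t * ‖u t‖) ^ p) volume a b :=
    (hw.mul ((hh.mul hu.norm).rpow_const fun _ _ => .inr hp0)).intervalIntegrable_of_Icc hab
  have hprod : ContinuousOn (fun t => ‖u t‖ ^ p * h t ^ (p - 1)) (Icc a b) :=
    (hu.norm.rpow_const fun _ _ => .inr hp0).mul
      (hh.rpow_const fun t ht => .inl (hh0 t ht).ne')
  have hle := intervalIntegral.integral_le_sub_of_hasDeriv_right_of_le hab hprod
    (fun t ht => (hasDerivAt_norm_rpow_mul_rpow hp (hud t ht) (hhd t ht)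
      (hh0 t (Ioo_subset_Icc_self ht)).ne').hasDerivWithinAt)
    ((intervalIntegrable_iff_integrableOn_Icc_of_le hab).mp (hdensity.sub henergy))
    (fun t ht => riccati_pointwise_le hp (hw0 t (Ioo_subset_Icc_self ht))
      (hh0 t (Ioo_subset_Icc_self ht)) (u t) (u' t))
  rw [intervalIntegral.integral_sub hdensity henergy] at hle
  have hleft : 0 ≤ ‖u a‖ ^ p * h a ^ (p - 1) :=
    mul_nonneg (by positivity) (Real.rpow_nonneg (hh0 a (left_mem_Icc.mpr hab)).le _)
  linarith

theorem integral_riccati_le_of_Ioc (hp : 1 < p) (hab : a < b)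
    (hu : ContinuousOn u (Ioc a b)) (hud : ∀ t ∈ Ioo a b, HasDerivAt u (u' t) t)
    (hw : ContinuousOn w (Ioc a b)) (hw0 : ∀ t ∈ Ioc a b, 0 < w t)
    (hh : ContinuousOn h (Ioc a b)) (hh0 : ∀ t ∈ Ioc a b, 0 < h t)
    (hhd : ∀ t ∈ Ioo a b, HasDerivAt h (p / (p - 1) * w t * h t ^ 2) t)
    (henergy : IntervalIntegrable (fun t => ‖u' t‖ ^ p * w t ^ (1 - p)) volume a b) :
    IntervalIntegrable (fun t => w t * (h t * ‖u t‖) ^ p) volume a b ∧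
      ∫ t in a..b, w t * (h t * ‖u t‖) ^ p ≤
        (∫ t in a..b, ‖u' t‖ ^ p * w t ^ (1 - p)) + ‖u b‖ ^ p * h b ^ (p - 1) := by
  have hp0 : 0 ≤ p := by linarith
  have hIcc {x : ℝ} (hx : x ∈ Ioo a b) : Icc x b ⊆ Ioc a b := Icc_subset_Ioc hx.1 le_rfl
  refine intervalIntegrable_and_integral_le_of_forall_Ioo hab (fun t ht => ?_)
    (fun x hx => ?_) fun x hx => ?_
  · exact mul_nonneg (hw0 t ht).le
      (Real.rpow_nonneg (mul_nonneg (hh0 t ht).le (norm_nonneg _)) p)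
  · exact ((hw.mul ((hh.mul hu.norm).rpow_const fun _ _ => .inr hp0)).mono
      (hIcc hx)).intervalIntegrable_of_Icc hx.2.le
  · have hIoo : Ioo x b ⊆ Ioo a b := Ioo_subset_Ioo_left hx.1.le
    have henergy_le : ∫ t in x..b, ‖u' t‖ ^ p * w t ^ (1 - p) ≤
        ∫ t in a..b, ‖u' t‖ ^ p * w t ^ (1 - p) := by
      refine intervalIntegral.integral_mono_interval hx.1.le hx.2.le le_rfl ?_ henergy
      filter_upwards [ae_restrict_mem measurableSet_Ioc] with t ht
      exact mul_nonneg (by positivity) (Real.rpow_nonneg (hw0 t ht).le _)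
    have henergy_x : IntervalIntegrable (fun t => ‖u' t‖ ^ p * w t ^ (1 - p)) volume x b :=
      henergy.mono_set (uIcc_subset_uIcc_right
        (Icc_subset_uIcc (Ioo_subset_Icc_self hx)))
    exact (integral_riccati_le hp hx.2.le (hu.mono (hIcc hx)) (fun t ht => hud t (hIoo ht))
      (hw.mono (hIcc hx)) (fun t ht => hw0 t (hIcc hx ht)) (hh.mono (hIcc hx))
      (fun t ht => hh0 t (hIcc hx ht)) (fun t ht => hhd t (hIoo ht)) henergy_x).trans
      (by gcongr)

theorem weighted_hardy_inequality (hp : 1 < p) (hab : a < b)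
    (hu : ContinuousOn u (Ioc a b)) (hud : ∀ t ∈ Ioo a b, HasDerivAt u (u' t) t)
    (hw : ContinuousOn w (Ioc a b)) (hw0 : ∀ t ∈ Ioc a b, 0 < w t)
    (hF : ContinuousOn F (Ioc a b)) (hF0 : ∀ t ∈ Ioc a b, 0 < F t)
    (hFd : ∀ t ∈ Ioo a b, HasDerivAt F (-w t) t)
    (henergy : IntervalIntegrable (fun t => ‖u' t‖ ^ p * w t ^ (1 - p)) volume a b) :
    IntervalIntegrable (fun t => ‖u t‖ ^ p * w t / F t ^ p) volume a b ∧
      (1 - 1 / p) ^ p * (∫ t in a..b, ‖u t‖ ^ p * w t / F t ^ p) ≤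
        (∫ t in a..b, ‖u' t‖ ^ p * w t ^ (1 - p))
          + (1 - 1 / p) ^ (p - 1) * F b ^ (1 - p) * ‖u b‖ ^ p := by
  have hc : 0 < 1 - 1 / p := by rw [sub_pos, div_lt_one (by linarith)]; exact hp
  set c := 1 - 1 / p
  have hcp : c ^ p ≠ 0 := (Real.rpow_pos_of_pos hc p).ne'
  have hdensity : EqOn (fun t => w t * (c / F t * ‖u t‖) ^ p / c ^ p)
      (fun t => ‖u t‖ ^ p * w t / F t ^ p) (uIoo a b) := fun t ht => by
    have hFt : 0 ≤ F t := (hF0 t (Ioo_subset_Ioc_self (uIoo_of_le hab.le ▸ ht))).le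
    simp only [Real.mul_rpow (div_nonneg hc.le hFt) (norm_nonneg (u t)),
      Real.div_rpow hc.le hFt]
    field_simp
  have hboundary : ‖u b‖ ^ p * (c / F b) ^ (p - 1) = c ^ (p - 1) * F b ^ (1 - p) * ‖u b‖ ^ p := by
    have hFb : 0 ≤ F b := (hF0 b (right_mem_Ioc.mpr hab)).le
    rw [Real.div_rpow hc.le hFb, ← neg_sub p 1, Real.rpow_neg hFb]
    ring
  obtain ⟨hint, hle⟩ := integral_riccati_le_of_Ioc hp hab hu hud hw hw0
    (continuousOn_const.div hF fun t ht => (hF0 t ht).ne') (fun t ht => div_pos hc (hF0 t ht))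
    (fun t ht => hasDerivAt_const_div_riccati (zero_lt_one.trans hp).ne' (hFd t ht)
      (hF0 t (Ioo_subset_Ioc_self ht)).ne') henergy
  rw [← intervalIntegrable_congr_uIoo hdensity, ← intervalIntegral.integral_congr_uIoo hdensity,
    intervalIntegral.integral_div, mul_div_cancel₀ _ hcp, ← hboundary]
  exact ⟨hint.div_const _, hle⟩

end Hardy

section ExponentialWeight

theorem continuousOn_exp_div_Ioi (r : ℝ) : ContinuousOn (fun t => Real.exp (r / t)) (Ioi 0) :=
  (continuousOn_const.div continuousOn_id fun _ ht => ne_of_gt ht).rexp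

theorem hasDerivAt_integral_exp_one_div {t b : ℝ} (ht : 0 < t) (hb : 0 < b) :
    HasDerivAt (fun x => ∫ s in x..b, Real.exp (1 / s)) (-Real.exp (1 / t)) t := by
  have hcont := continuousOn_exp_div_Ioi 1
  exact intervalIntegral.integral_hasDerivAt_left
    (hcont.mono fun s hs => (lt_min ht hb).trans_le hs.1).intervalIntegrable
    (hcont.stronglyMeasurableAtFilter isOpen_Ioi t ht) (hcont.continuousAt (Ioi_mem_nhds ht))

theorem exp_one_div_rpow_one_sub (p t : ℝ) :
    Real.exp (1 / t) ^ (1 - p) = Real.exp (-(p - 1) / t) := by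
  rw [← Real.exp_mul]
  ring_nf

theorem mul_exp_div_exp_mul_rpow {F : ℝ} (hF : 0 ≤ F) (p t x : ℝ) :
    x * Real.exp (-(p - 1) / t) / (Real.exp (-1 / t) * F) ^ p = x * Real.exp (1 / t) / F ^ p := by
  have hexp : Real.exp (-(p - 1) / t) = Real.exp (1 / t) * Real.exp (-1 / t) ^ p := by
    rw [← Real.exp_mul, ← Real.exp_add]
    ring_nf
  rw [Real.mul_rpow (Real.exp_pos _).le hF, hexp]
  field_simp

theorem hardy_exp_nondoubling_P_general {E : Type*} [NormedAddCommGroup E]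
    [InnerProductSpace ℝ E] {p μ η : ℝ} (hp : 1 < p) (hμ : 0 < μ) (hη : 0 < η) {u u' : ℝ → E}
    (hu : ∀ t ∈ Ioc 0 η, HasDerivWithinAt u (u' t) (Ioc 0 η) t)
    (henergy : IntervalIntegrable (fun t => ‖u' t‖ ^ p * Real.exp (-(p - 1) / t)) volume 0 η) :
    IntervalIntegrable (fun t => ‖u t‖ ^ p * Real.exp (-(p - 1) / t)
        / (Real.exp (-1 / t) * ((∫ s in t..η, Real.exp (1 / s)) + μ)) ^ p) volume 0 η ∧
      (∫ t in (0 : ℝ)..η, ‖u' t‖ ^ p * Real.exp (-(p - 1) / t))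
        + ((1 - 1 / p) ^ p) ^ ((p - 1) / p) * μ ^ (1 - p) * ‖u η‖ ^ p
      ≥ (1 - 1 / p) ^ p *
          ∫ t in (0 : ℝ)..η, ‖u t‖ ^ p * Real.exp (-(p - 1) / t)
            / (Real.exp (-1 / t) * ((∫ s in t..η, Real.exp (1 / s)) + μ)) ^ p := by
  have hp0 : 0 < p := by linarith
  have hc : 0 ≤ 1 - 1 / p := by rw [sub_nonneg, div_le_one hp0]; exact hp.le
  have hF0 : ∀ t ∈ Ioc 0 η, 0 < (∫ s in t..η, Real.exp (1 / s)) + μ := fun t ht =>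
    add_pos_of_nonneg_of_pos
      (intervalIntegral.integral_nonneg ht.2 fun s _ => (Real.exp_pos _).le) hμ
  have hFd : ∀ t, 0 < t → HasDerivAt (fun x => (∫ s in x..η, Real.exp (1 / s)) + μ)
      (-Real.exp (1 / t)) t := fun t ht => (hasDerivAt_integral_exp_one_div ht hη).add_const μ
  have hdensity : EqOn (fun t => ‖u t‖ ^ p * Real.exp (-(p - 1) / t)
        / (Real.exp (-1 / t) * ((∫ s in t..η, Real.exp (1 / s)) + μ)) ^ p)
      (fun t => ‖u t‖ ^ p * Real.exp (1 / t) / ((∫ s in t..η, Real.exp (1 / s)) + μ) ^ p)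
      (uIoo 0 η) := fun t ht =>
    mul_exp_div_exp_mul_rpow (hF0 t (Ioo_subset_Ioc_self (uIoo_of_le hη.le ▸ ht))).le p t _
  have hardy := weighted_hardy_inequality (w := fun t => Real.exp (1 / t)) hp hη
    (fun t ht => (hu t ht).continuousWithinAt)
    (fun t ht => (hu t (Ioo_subset_Ioc_self ht)).hasDerivAt (Ioc_mem_nhds ht.1 ht.2))
    ((continuousOn_exp_div_Ioi 1).mono Ioc_subset_Ioi_self) (fun t _ => Real.exp_pos _)
    (fun t ht => (hFd t ht.1).continuousAt.continuousWithinAt) hF0 (fun t ht => hFd t ht.1)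
    (by simpa only [exp_one_div_rpow_one_sub] using henergy)
  simp only [exp_one_div_rpow_one_sub, intervalIntegral.integral_same, zero_add] at hardy
  rwa [intervalIntegrable_congr_uIoo hdensity, intervalIntegral.integral_congr_uIoo hdensity,
    ← Real.rpow_mul hc, mul_div_cancel₀ _ hp0.ne']

end ExponentialWeight

/-- One-dimensional Hardy inequality with weight `e^{-(p-1)/t}` and
one-sided boundary term, for `C_c^1((0,η])` functions (compact support in `(0,η]`). -/
theorem hardy_exp_nondoubling_P (p μ η : ℝ) (hp : 1 < p) (hμ : 0 < μ) (hη : 0 < η)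
    (u u' : ℝ → ℝ)
    (hu : ∀ t ∈ Set.Ioc (0:ℝ) η, HasDerivWithinAt u (u' t) (Set.Ioc (0:ℝ) η) t)
    (hu'c : ContinuousOn u' (Set.Ioc (0:ℝ) η))
    (hsupp : ∃ a, 0 < a ∧ ∀ t ≤ a, u t = 0) :
    (∫ t in (0:ℝ)..η, |u' t| ^ p * Real.exp (-(p - 1) / t))
      + ((1 - 1 / p) ^ p) ^ ((p - 1) / p) * μ ^ (1 - p) * |u η| ^ p
    ≥ (1 - 1 / p) ^ p *
        ∫ t in (0:ℝ)..η, |u t| ^ p * Real.exp (-(p - 1) / t)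
          / (Real.exp (-1 / t) * ((∫ s in t..η, Real.exp (1 / s)) + μ)) ^ p := by
  obtain ⟨a, ha, hua⟩ := hsupp
  exact (hardy_exp_nondoubling_P_general hp hμ hη hu (intervalIntegrable_norm_deriv_rpow_mul
    (zero_lt_one.trans hp) hη.le ha hu hu'c
    ((continuousOn_exp_div_Ioi _).mono Ioc_subset_Ioi_self) fun t ht => hua t ht.2)).2
end

section
/- Let 1<p<∞ and η>0. Then for every u ∈ C_c^1((0,η]) one has ∫_0^η |u'(t)|^p e^{(p-1)/t} dt ≥ Λ_p ∫_0^η |u(t)|^p e^{(p-1)/t} / ( e^{1/t} ∫_0^t e^{-1/s} ds )^p dt + Λ_p^{1/p'} ( ∫_0^η e^{-1/s} ds )^{1-p} |u(η)|^p. -/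
/-!
Let `G' = w > 0` and let `v ≥ 0` be nondecreasing. The derivative of `G ^ (1 - p) * v ^ p` is
`p * (v / G) ^ (p - 1) * v' - (p - 1) * (v / G) ^ p * w`, and Young's inequality for
`X = v' / w` and `Y = (1 - 1 / p) * (v / G)` says exactly that `(1 - 1 / p) ^ (p - 1)` times this
derivative is at most `v' ^ p * w ^ (1 - p) - (1 - 1 / p) ^ p * (v / G) ^ p * w`. Integrating gives
Hardy's inequality for `v`, with its boundary term. A vector-valued `u` is dominated by
`v t = ‖u a‖ + ∫ s in a..t, ‖u' s‖`, for which `v' = ‖u'‖`. The exponential inequality is the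
case `w t = exp (-1 / t)`, with `a` so small that `u a = 0`.
-/

open MeasureTheory Set

section PointwiseInequalities

variable {p : ℝ}

theorem one_sub_one_div_pos (hp : 1 < p) : 0 < 1 - 1 / p := by
  rw [sub_pos, div_lt_one (by linarith)]
  exact hp

theorem mul_mul_rpow_sub_one_le_rpow_add_mul_rpow {x y : ℝ} (hp : 1 < p) (hx : 0 ≤ x)
    (hy : 0 ≤ y) : p * (x * y ^ (p - 1)) ≤ x ^ p + (p - 1) * y ^ p := by
  have young := Real.young_inequality_of_nonneg hx (Real.rpow_nonneg hy (p - 1))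
    (Real.HolderConjugate.conjExponent hp)
  rw [Real.conjExponent, ← Real.rpow_mul hy, mul_div_cancel₀ p (sub_ne_zero.mpr hp.ne')] at young
  calc p * (x * y ^ (p - 1)) ≤ p * (x ^ p / p + y ^ p / (p / (p - 1))) := by gcongr
    _ = x ^ p + (p - 1) * y ^ p := by field_simp

theorem hardy_integrand_le {w r y : ℝ} (hp : 1 < p) (hw : 0 < w) (hr : 0 ≤ r) (hy : 0 ≤ y) :
    (1 - 1 / p) ^ (p - 1) * (p * r ^ (p - 1) * y - (p - 1) * r ^ p * w)
      ≤ y ^ p * w ^ (1 - p) - (1 - 1 / p) ^ p * (r ^ p * w) := by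
  have hc : 0 < 1 - 1 / p := one_sub_one_div_pos hp
  have hpc : (1 - 1 / p) ^ (p - 1) * (p - 1) = p * (1 - 1 / p) ^ p := by
    rw [Real.rpow_sub_one hc.ne', div_mul_eq_mul_div, div_eq_iff hc.ne']
    field_simp
  have young : p * (y / w * ((1 - 1 / p) ^ (p - 1) * r ^ (p - 1)))
      ≤ y ^ p / w ^ p + (p - 1) * ((1 - 1 / p) ^ p * r ^ p) := by
    simpa only [Real.mul_rpow hc.le hr, Real.div_rpow hy hw.le] using
      mul_mul_rpow_sub_one_le_rpow_add_mul_rpow hp (div_nonneg hy hw.le) (mul_nonneg hc.le hr)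
  calc (1 - 1 / p) ^ (p - 1) * (p * r ^ (p - 1) * y - (p - 1) * r ^ p * w)
      = w * (p * (y / w * ((1 - 1 / p) ^ (p - 1) * r ^ (p - 1))))
        - (1 - 1 / p) ^ (p - 1) * (p - 1) * (r ^ p * w) := by field_simp
    _ ≤ w * (y ^ p / w ^ p + (p - 1) * ((1 - 1 / p) ^ p * r ^ p))
        - (1 - 1 / p) ^ (p - 1) * (p - 1) * (r ^ p * w) := by gcongr
    _ = y ^ p * w ^ (1 - p) - (1 - 1 / p) ^ p * (r ^ p * w) := by
      rw [hpc, Real.rpow_sub hw, Real.rpow_one]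
      ring

theorem rpow_mul_rpow_one_sub_div_inv_mul_rpow_eq {x w G : ℝ} (hx : 0 ≤ x) (hw : 0 < w)
    (hG : 0 ≤ G) : x ^ p * w ^ (1 - p) / (w⁻¹ * G) ^ p = (x / G) ^ p * w := by
  rw [Real.rpow_sub hw, Real.rpow_one, Real.mul_rpow (inv_nonneg.mpr hw.le) hG,
    Real.inv_rpow hw.le, Real.div_rpow hx hG]
  field_simp

end PointwiseInequalities

section Calculus

variable {E : Type*} [NormedAddCommGroup E] [NormedSpace ℝ E] {a b : ℝ}

theorem hasDerivAt_integral_of_continuousOn_Ioo [CompleteSpace E] {f : ℝ → E} {t : ℝ}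
    (hf : IntervalIntegrable f volume a b) (hfc : ContinuousOn f (Ioo a b)) (ht : t ∈ Ioo a b) :
    HasDerivAt (fun x => ∫ s in a..x, f s) (f t) t :=
  intervalIntegral.integral_hasDerivAt_right
    (hf.mono_set (uIcc_subset_uIcc_left (Icc_subset_uIcc (Ioo_subset_Icc_self ht))))
    (hfc.stronglyMeasurableAtFilter isOpen_Ioo t ht) (hfc.continuousAt (isOpen_Ioo.mem_nhds ht))

theorem integral_eq_integral_of_eqOn_zero {f : ℝ → E} {c : ℝ} (hab : a ≤ b) (hbc : b ≤ c)
    (hf : EqOn f 0 (Ioc a b)) : ∫ t in a..c, f t = ∫ t in b..c, f t := by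
  rw [intervalIntegral.integral_of_le (hab.trans hbc), intervalIntegral.integral_of_le hbc]
  refine setIntegral_eq_of_subset_of_forall_sdiff_eq_zero measurableSet_Ioc
    (Ioc_subset_Ioc_left hab) fun t ht => hf ⟨ht.1.1, ?_⟩
  by_contra! hbt
  exact ht.2 ⟨hbt, ht.1.2⟩

theorem norm_le_norm_add_integral_norm_deriv {u u' : ℝ → E} (huc : ContinuousOn u (Icc a b))
    (hu : ∀ t ∈ Ioo a b, HasDerivAt u (u' t) t) (hu'c : ContinuousOn u' (Icc a b)) {t : ℝ}
    (ht : t ∈ Icc a b) : ‖u t‖ ≤ ‖u a‖ + ∫ s in a..t, ‖u' s‖ := by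
  have hIoo : Ioo a t ⊆ Ioo a b := Ioo_subset_Ioo_right ht.2
  have hIcc : Icc a t ⊆ Icc a b := Icc_subset_Icc_right ht.2
  have hsub : ‖u t - u a‖ ≤ ∫ s in a..t, ‖u' s‖ :=
    norm_sub_le_integral_of_norm_deriv_le_of_le ht.1 (huc.mono hIcc)
      (fun s hs => (hu s (hIoo hs)).differentiableAt.differentiableWithinAt)
      (.of_forall fun s hs => by rw [(hu s (hIoo hs)).deriv])
      ((hu'c.mono hIcc).norm.intervalIntegrable_of_Icc ht.1)
  linarith [norm_sub_norm_le (u t) (u a)]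

theorem hasDerivAt_rpow_one_sub_mul_rpow {p t v' w : ℝ} {v G : ℝ → ℝ} (hp : 1 ≤ p)
    (hv0 : 0 ≤ v t) (hG0 : 0 < G t) (hv : HasDerivAt v v' t) (hG : HasDerivAt G w t) :
    HasDerivAt (fun s => G s ^ (1 - p) * v s ^ p)
      (p * (v t / G t) ^ (p - 1) * v' - (p - 1) * (v t / G t) ^ p * w) t := by
  refine ((hG.rpow_const (p := 1 - p) (.inl hG0.ne')).mul
    (hv.rpow_const (.inr hp))).congr_deriv ?_
  rw [Real.div_rpow hv0 hG0.le, Real.div_rpow hv0 hG0.le, Real.rpow_sub_one hG0.ne' (1 - p),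
    Real.rpow_sub_one hG0.ne' p, Real.rpow_sub hG0, Real.rpow_one]
  field_simp
  ring

end Calculus

section CompactInterval

variable {p a b : ℝ} {w G : ℝ → ℝ}

theorem continuousOn_div_rpow_mul {v : ℝ → ℝ} (hp : 0 ≤ p) (hwc : ContinuousOn w (Icc a b))
    (hGc : ContinuousOn G (Icc a b)) (hG : ∀ t ∈ Icc a b, G t ≠ 0)
    (hvc : ContinuousOn v (Icc a b)) :
    ContinuousOn (fun t => (v t / G t) ^ p * w t) (Icc a b) :=
  ((hvc.div hGc hG).rpow_const fun _ _ => .inr hp).mul hwc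

theorem integral_div_rpow_mul_mono {u v : ℝ → ℝ} (hp : 0 ≤ p) (hab : a ≤ b)
    (hwc : ContinuousOn w (Icc a b)) (hw : ∀ t ∈ Icc a b, 0 ≤ w t)
    (hGc : ContinuousOn G (Icc a b)) (hG : ∀ t ∈ Icc a b, 0 < G t)
    (huc : ContinuousOn u (Icc a b)) (hvc : ContinuousOn v (Icc a b))
    (hu : ∀ t ∈ Icc a b, 0 ≤ u t) (huv : ∀ t ∈ Icc a b, u t ≤ v t) :
    ∫ t in a..b, (u t / G t) ^ p * w t ≤ ∫ t in a..b, (v t / G t) ^ p * w t := by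
  have hG0 : ∀ t ∈ Icc a b, G t ≠ 0 := fun t ht => (hG t ht).ne'
  refine intervalIntegral.integral_mono_on hab
    ((continuousOn_div_rpow_mul hp hwc hGc hG0 huc).intervalIntegrable_of_Icc hab)
    ((continuousOn_div_rpow_mul hp hwc hGc hG0 hvc).intervalIntegrable_of_Icc hab)
    fun t ht => ?_
  exact mul_le_mul_of_nonneg_right (Real.rpow_le_rpow (div_nonneg (hu t ht) (hG t ht).le)
    (div_le_div_of_nonneg_right (huv t ht) (hG t ht).le) hp) (hw t ht)

theorem hardy_inequality_Icc_of_nonneg (hp : 1 < p) (hab : a ≤ b) (hwc : ContinuousOn w (Icc a b))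
    (hw : ∀ t ∈ Icc a b, 0 < w t) (hGc : ContinuousOn G (Icc a b)) (hG : ∀ t ∈ Icc a b, 0 < G t)
    (hG' : ∀ t ∈ Ioo a b, HasDerivAt G (w t) t) {v v' : ℝ → ℝ} (hvc : ContinuousOn v (Icc a b))
    (hv : ∀ t ∈ Ioo a b, 0 ≤ v t) (hv' : ∀ t ∈ Ioo a b, HasDerivAt v (v' t) t)
    (hv'c : ContinuousOn v' (Icc a b)) (hv'_nonneg : ∀ t ∈ Ioo a b, 0 ≤ v' t) :
    (1 - 1 / p) ^ p * (∫ t in a..b, (v t / G t) ^ p * w t)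
        + (1 - 1 / p) ^ (p - 1) * (G b ^ (1 - p) * v b ^ p)
      ≤ (∫ t in a..b, v' t ^ p * w t ^ (1 - p))
        + (1 - 1 / p) ^ (p - 1) * (G a ^ (1 - p) * v a ^ p) := by
  have hp0 : 0 ≤ p := by linarith
  have hG0 : ∀ t ∈ Icc a b, G t ≠ 0 := fun t ht => (hG t ht).ne'
  have hlhs : ContinuousOn (fun t => (v t / G t) ^ p * w t) (Icc a b) :=
    continuousOn_div_rpow_mul hp0 hwc hGc hG0 hvc
  have hrhs : ContinuousOn (fun t => v' t ^ p * w t ^ (1 - p)) (Icc a b) :=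
    (hv'c.rpow_const fun _ _ => .inr hp0).mul (hwc.rpow_const fun t ht => .inl (hw t ht).ne')
  have hbdry : ContinuousOn (fun t => (1 - 1 / p) ^ (p - 1) * (G t ^ (1 - p) * v t ^ p))
      (Icc a b) :=
    continuousOn_const.mul ((hGc.rpow_const fun t ht => .inl (hG t ht).ne').mul
      (hvc.rpow_const fun _ _ => .inr hp0))
  have ftc := intervalIntegral.sub_le_integral_of_hasDeriv_right_of_le hab hbdry
    (φ := fun t => v' t ^ p * w t ^ (1 - p) - (1 - 1 / p) ^ p * ((v t / G t) ^ p * w t))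
    (fun t ht => ((hasDerivAt_rpow_one_sub_mul_rpow hp.le (hv t ht)
      (hG t (Ioo_subset_Icc_self ht)) (hv' t ht) (hG' t ht)).const_mul _).hasDerivWithinAt)
    (hrhs.sub (continuousOn_const.mul hlhs)).integrableOn_Icc
    (fun t ht => hardy_integrand_le hp (hw t (Ioo_subset_Icc_self ht))
      (div_nonneg (hv t ht) (hG t (Ioo_subset_Icc_self ht)).le) (hv'_nonneg t ht))
  rw [intervalIntegral.integral_sub (hrhs.intervalIntegrable_of_Icc hab)
    ((hlhs.intervalIntegrable_of_Icc hab).const_mul _),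
    intervalIntegral.integral_const_mul] at ftc
  linarith

theorem hardy_inequality_Icc {E : Type*} [NormedAddCommGroup E] [NormedSpace ℝ E] (hp : 1 < p)
    (hab : a ≤ b) (hwc : ContinuousOn w (Icc a b)) (hw : ∀ t ∈ Icc a b, 0 < w t)
    (hGc : ContinuousOn G (Icc a b)) (hG : ∀ t ∈ Icc a b, 0 < G t)
    (hG' : ∀ t ∈ Ioo a b, HasDerivAt G (w t) t) {u u' : ℝ → E} (huc : ContinuousOn u (Icc a b))
    (hu : ∀ t ∈ Ioo a b, HasDerivAt u (u' t) t) (hu'c : ContinuousOn u' (Icc a b)) :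
    (1 - 1 / p) ^ p * (∫ t in a..b, (‖u t‖ / G t) ^ p * w t)
        + (1 - 1 / p) ^ (p - 1) * (G b ^ (1 - p) * ‖u b‖ ^ p)
      ≤ (∫ t in a..b, ‖u' t‖ ^ p * w t ^ (1 - p))
        + (1 - 1 / p) ^ (p - 1) * (G a ^ (1 - p) * ‖u a‖ ^ p) := by
  have hp0 : 0 ≤ p := by linarith
  have hc : 0 < 1 - 1 / p := one_sub_one_div_pos hp
  have hint : IntervalIntegrable (fun t => ‖u' t‖) volume a b :=
    hu'c.norm.intervalIntegrable_of_Icc hab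
  let v : ℝ → ℝ := fun t => ‖u a‖ + ∫ s in a..t, ‖u' s‖
  have huv : ∀ t ∈ Icc a b, ‖u t‖ ≤ v t := fun t ht =>
    norm_le_norm_add_integral_norm_deriv huc hu hu'c ht
  have hva : v a = ‖u a‖ := by simp [v]
  have hvc : ContinuousOn v (Icc a b) := by
    rw [← uIcc_of_le hab]
    exact continuousOn_const.add
      (intervalIntegral.continuousOn_primitive_interval' hint left_mem_uIcc)
  have hv' : ∀ t ∈ Ioo a b, HasDerivAt v ‖u' t‖ t := fun t ht =>
    (hasDerivAt_integral_of_continuousOn_Ioo hint (hu'c.norm.mono Ioo_subset_Icc_self)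
      ht).const_add _
  have hlhs : ∫ t in a..b, (‖u t‖ / G t) ^ p * w t ≤ ∫ t in a..b, (v t / G t) ^ p * w t :=
    integral_div_rpow_mul_mono hp0 hab hwc (fun t ht => (hw t ht).le) hGc hG huc.norm hvc
      (fun t _ => norm_nonneg _) huv
  have hGb : 0 < G b := hG b (right_mem_Icc.mpr hab)
  calc (1 - 1 / p) ^ p * (∫ t in a..b, (‖u t‖ / G t) ^ p * w t)
        + (1 - 1 / p) ^ (p - 1) * (G b ^ (1 - p) * ‖u b‖ ^ p)
      ≤ (1 - 1 / p) ^ p * (∫ t in a..b, (v t / G t) ^ p * w t)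
        + (1 - 1 / p) ^ (p - 1) * (G b ^ (1 - p) * v b ^ p) := by
        gcongr
        exact huv b (right_mem_Icc.mpr hab)
    _ ≤ (∫ t in a..b, ‖u' t‖ ^ p * w t ^ (1 - p))
        + (1 - 1 / p) ^ (p - 1) * (G a ^ (1 - p) * v a ^ p) :=
      hardy_inequality_Icc_of_nonneg hp hab hwc hw hGc hG hG' hvc
        (fun t ht => (norm_nonneg _).trans (huv t (Ioo_subset_Icc_self ht))) hv' hu'c.norm
        fun t _ => norm_nonneg _
    _ = _ := by rw [hva]

end CompactInterval

section HalfOpenInterval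

variable {E : Type*} [NormedAddCommGroup E] [NormedSpace ℝ E] {p α β : ℝ} {w : ℝ → ℝ}
  {u u' : ℝ → E}

theorem deriv_eqOn_zero_of_eqOn_zero {a b : ℝ}
    (hu : ∀ t ∈ Ioc α β, HasDerivWithinAt u (u' t) (Ioc α β) t) (haβ : a < β) (hab : a < b)
    (hzero : EqOn u 0 (Ioc α b)) : EqOn u' 0 (Ioc α a) := fun t ht => by
  have hderiv : HasDerivAt u (u' t) t :=
    (hu t ⟨ht.1, ht.2.trans haβ.le⟩).hasDerivAt (Ioc_mem_nhds ht.1 (ht.2.trans_lt haβ))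
  refine hderiv.unique ((hasDerivAt_const t (0 : E)).congr_of_eventuallyEq ?_)
  filter_upwards [Ioc_mem_nhds ht.1 (ht.2.trans_lt hab)] with s hs using hzero hs

theorem integral_pos_of_forall_Ioc_pos (hwi : IntervalIntegrable w volume α β)
    (hw : ∀ t ∈ Ioc α β, 0 < w t) {t : ℝ} (ht : t ∈ Ioc α β) : 0 < ∫ s in α..t, w s :=
  intervalIntegral.intervalIntegral_pos_of_pos_on
    (hwi.mono_set (uIcc_subset_uIcc_left (Icc_subset_uIcc (Ioc_subset_Icc_self ht))))
    (fun s hs => hw s ⟨hs.1, hs.2.le.trans ht.2⟩) ht.1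

theorem hardy_inequality_Ioc (hp : 1 < p) (hαβ : α < β) (hwi : IntervalIntegrable w volume α β)
    (hwc : ContinuousOn w (Ioc α β)) (hw : ∀ t ∈ Ioc α β, 0 < w t)
    (hu : ∀ t ∈ Ioc α β, HasDerivWithinAt u (u' t) (Ioc α β) t)
    (hu'c : ContinuousOn u' (Ioc α β)) (hsupp : ∃ a, α < a ∧ EqOn u 0 (Ioc α a)) :
    (1 - 1 / p) ^ p * (∫ t in α..β, (‖u t‖ / ∫ s in α..t, w s) ^ p * w t)
        + (1 - 1 / p) ^ (p - 1) * ((∫ s in α..β, w s) ^ (1 - p) * ‖u β‖ ^ p)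
      ≤ ∫ t in α..β, ‖u' t‖ ^ p * w t ^ (1 - p) := by
  obtain ⟨b, hαb, hub⟩ := hsupp
  obtain ⟨a, hαa, haβb⟩ := exists_between (lt_min hαβ hαb)
  obtain ⟨haβ, hab⟩ := lt_min_iff.mp haβb
  have hp0 : p ≠ 0 := by linarith
  have hsub : Icc a β ⊆ Ioc α β := fun t ht => ⟨hαa.trans_le ht.1, ht.2⟩
  have hua : EqOn u 0 (Ioc α a) := hub.mono (Ioc_subset_Ioc_right hab.le)
  have hu'a : EqOn u' 0 (Ioc α a) := deriv_eqOn_zero_of_eqOn_zero hu haβ hab hub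
  have hGc : ContinuousOn (fun t => ∫ s in α..t, w s) (Icc a β) :=
    (intervalIntegral.continuousOn_primitive_interval' hwi left_mem_uIcc).mono
      ((hsub.trans Ioc_subset_Icc_self).trans Icc_subset_uIcc)
  have hlhs : EqOn (fun t => (‖u t‖ / ∫ s in α..t, w s) ^ p * w t) 0 (Ioc α a) :=
    fun t ht => by simp [hua ht, hp0]
  have hrhs : EqOn (fun t => ‖u' t‖ ^ p * w t ^ (1 - p)) 0 (Ioc α a) :=
    fun t ht => by simp [hu'a ht, hp0]
  have hardy := hardy_inequality_Icc hp haβ.le (hwc.mono hsub) (fun t ht => hw t (hsub ht)) hGc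
    (fun t ht => integral_pos_of_forall_Ioc_pos hwi hw (hsub ht))
    (fun t ht => hasDerivAt_integral_of_continuousOn_Ioo hwi (hwc.mono Ioo_subset_Ioc_self)
      ⟨hαa.trans ht.1, ht.2⟩)
    (fun t ht => (hu t (hsub ht)).continuousWithinAt.mono hsub)
    (fun t ht => (hu t (hsub (Ioo_subset_Icc_self ht))).hasDerivAt
      (Ioc_mem_nhds (hαa.trans ht.1) ht.2))
    (hu'c.mono hsub)
  rwa [hua ⟨hαa, le_rfl⟩, Pi.zero_apply, norm_zero, Real.zero_rpow hp0, mul_zero, mul_zero,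
    add_zero, ← integral_eq_integral_of_eqOn_zero hαa.le haβ.le hlhs,
    ← integral_eq_integral_of_eqOn_zero hαa.le haβ.le hrhs] at hardy

/-- In terms of the weight `W = w ^ (1 - p)`, the function `(w t)⁻¹ * ∫ s in α..t, w s` is
`W t ^ (1 / (p - 1)) * ∫ s in α..t, W s ^ (-1 / (p - 1))`. -/
theorem hardy_exp_nondoubling_Q_general (hp : 1 < p) (hαβ : α < β)
    (hwi : IntervalIntegrable w volume α β) (hwc : ContinuousOn w (Ioc α β))
    (hw : ∀ t ∈ Ioc α β, 0 < w t) (hu : ∀ t ∈ Ioc α β, HasDerivWithinAt u (u' t) (Ioc α β) t)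
    (hu'c : ContinuousOn u' (Ioc α β)) (hsupp : ∃ a, α < a ∧ EqOn u 0 (Ioc α a)) :
    (1 - 1 / p) ^ p *
        (∫ t in α..β, ‖u t‖ ^ p * w t ^ (1 - p) / ((w t)⁻¹ * ∫ s in α..t, w s) ^ p)
      + ((1 - 1 / p) ^ p) ^ ((p - 1) / p) * (∫ s in α..β, w s) ^ (1 - p) * ‖u β‖ ^ p
      ≤ ∫ t in α..β, ‖u' t‖ ^ p * w t ^ (1 - p) := by
  have hconst : ((1 - 1 / p) ^ p) ^ ((p - 1) / p) = (1 - 1 / p) ^ (p - 1) := by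
    rw [← Real.rpow_mul (one_sub_one_div_pos hp).le, mul_div_cancel₀ _ (by linarith)]
  have hint : ∫ t in α..β, ‖u t‖ ^ p * w t ^ (1 - p) / ((w t)⁻¹ * ∫ s in α..t, w s) ^ p
      = ∫ t in α..β, (‖u t‖ / ∫ s in α..t, w s) ^ p * w t := by
    refine intervalIntegral.integral_congr_Ioo_of_le hαβ.le fun t ht => ?_
    have htIoc : t ∈ Ioc α β := Ioo_subset_Ioc_self ht
    exact rpow_mul_rpow_one_sub_div_inv_mul_rpow_eq (norm_nonneg _) (hw t htIoc)
      (integral_pos_of_forall_Ioc_pos hwi hw htIoc).le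
  rw [hconst, hint, mul_assoc]
  exact hardy_inequality_Ioc hp hαβ hwi hwc hw hu hu'c hsupp

end HalfOpenInterval

section ExponentialWeight

theorem intervalIntegrable_exp_neg_one_div {a b : ℝ} (ha : 0 ≤ a) (hb : 0 ≤ b) :
    IntervalIntegrable (fun s : ℝ => Real.exp (-1 / s)) volume a b := by
  rw [intervalIntegrable_iff]
  refine Measure.integrableOn_of_bounded (M := 1) (by simp [uIoc])
    (Measurable.aestronglyMeasurable (by fun_prop)) ?_
  refine (ae_restrict_mem measurableSet_uIoc).mono fun s hs => ?_
  have hs0 : 0 ≤ s := (le_min ha hb).trans hs.1.le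
  rw [Real.norm_eq_abs, Real.abs_exp, Real.exp_le_one_iff]
  exact div_nonpos_of_nonpos_of_nonneg (by norm_num) hs0

theorem continuousOn_exp_neg_one_div : ContinuousOn (fun s : ℝ => Real.exp (-1 / s)) {0}ᶜ :=
  (continuousOn_const.div continuousOn_id fun _ hs => hs).rexp

theorem exp_neg_one_div_rpow_one_sub (p t : ℝ) :
    Real.exp (-1 / t) ^ (1 - p) = Real.exp ((p - 1) / t) := by
  rw [← Real.exp_mul]
  congr 1
  ring

theorem inv_exp_neg_one_div (t : ℝ) : (Real.exp (-1 / t))⁻¹ = Real.exp (1 / t) := by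
  rw [← Real.exp_neg, neg_div, neg_neg]

end ExponentialWeight

/-- One-dimensional Hardy inequality with weight `e^{(p-1)/t}` and
one-sided boundary term, for `C_c^1((0,η])` functions. -/
theorem hardy_exp_nondoubling_Q (p η : ℝ) (hp : 1 < p) (hη : 0 < η)
    (u u' : ℝ → ℝ)
    (hu : ∀ t ∈ Set.Ioc (0:ℝ) η, HasDerivWithinAt u (u' t) (Set.Ioc (0:ℝ) η) t)
    (hu'c : ContinuousOn u' (Set.Ioc (0:ℝ) η))
    (hsupp : ∃ a, 0 < a ∧ ∀ t ≤ a, u t = 0) :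
    (∫ t in (0:ℝ)..η, |u' t| ^ p * Real.exp ((p - 1) / t))
    ≥ (1 - 1 / p) ^ p *
        (∫ t in (0:ℝ)..η, |u t| ^ p * Real.exp ((p - 1) / t)
          / (Real.exp (1 / t) * ∫ s in (0:ℝ)..t, Real.exp (-1 / s)) ^ p)
      + ((1 - 1 / p) ^ p) ^ ((p - 1) / p) *
          (∫ s in (0:ℝ)..η, Real.exp (-1 / s)) ^ (1 - p) * |u η| ^ p := by
  obtain ⟨a, ha, hua⟩ := hsupp
  simpa only [ge_iff_le, Real.norm_eq_abs, exp_neg_one_div_rpow_one_sub, inv_exp_neg_one_div] using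
    hardy_exp_nondoubling_Q_general hp hη (intervalIntegrable_exp_neg_one_div le_rfl hη.le)
      (continuousOn_exp_neg_one_div.mono fun t ht => ht.1.ne') (fun t _ => Real.exp_pos _) hu hu'c
      ⟨a, ha, fun t ht => hua t ht.2⟩
end

section
/- Let 1<p<∞, η>0 and w ∈ Q(ℝ₊). Then for every u ∈ C_c^1((0,η]) one has ∫_0^η |u'(t)|^p W_p(t) dt ≥ Λ_p ∫_0^η |u(t)|^p W_p(t) / F_η(t)^p dt + Λ_p^{1/p'} f_η(η)^{1-p} |u(η)|^p. -/
open MeasureTheory Set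

/-- `f_η(t) = ∫_0^t w(s)⁻¹ ds`  (case `w ∈ Q(ℝ₊)`). -/
noncomputable def fQ (w : ℝ → ℝ) (t : ℝ) : ℝ := ∫ s in (0:ℝ)..t, (w s)⁻¹

/-- `F_η(t) = w(t) f_η(t)`. -/
noncomputable def FQ (w : ℝ → ℝ) (t : ℝ) : ℝ := w t * fQ w t

/-- `W_p(t) = w(t)^(p-1)`. -/
noncomputable def Wp (w : ℝ → ℝ) (p t : ℝ) : ℝ := w t ^ (p - 1)

/-!
Write `f = fQ w`, so that `f' = 1 / w`, and `c = 1 - 1 / p`. Differentiating the boundary term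
`c ^ (p - 1) * f ^ (1 - p) * |u| ^ p` and applying Young's inequality to `|u'|` and `c * |u| / f`
with weight `w` shows that its derivative is at most
`|u'| ^ p * w ^ (p - 1) - c ^ p * |u| ^ p * w ^ (p - 1) / (w * f) ^ p`. Since `u` vanishes near `0`,
the boundary term extends continuously by zero, and integrating over `[0, η]` gives the inequality.
-/

open Filter Topology

theorem mul_rpow_sub_one_le_add {p a b : ℝ} (hp : 1 < p) (ha : 0 ≤ a) (hb : 0 ≤ b) :
    p * (a * b ^ (p - 1)) ≤ a ^ p + (p - 1) * b ^ p := by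
  have hp₁ : 0 < p - 1 := sub_pos.2 hp
  have young := Real.young_inequality_of_nonneg ha (Real.rpow_nonneg hb (p - 1))
    (Real.HolderConjugate.conjExponent hp)
  rw [Real.conjExponent, ← Real.rpow_mul hb, mul_div_cancel₀ p hp₁.ne'] at young
  calc p * (a * b ^ (p - 1)) ≤ p * (a ^ p / p + b ^ p / (p / (p - 1))) := by gcongr
    _ = a ^ p + (p - 1) * b ^ p := by field_simp

theorem mul_rpow_sub_one_le_weighted_add {p a b w : ℝ} (hp : 1 < p) (ha : 0 ≤ a) (hb : 0 ≤ b)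
    (hw : 0 < w) : p * (a * b ^ (p - 1)) ≤ a ^ p * w ^ (p - 1) + (p - 1) * (b ^ p * w⁻¹) := by
  have hsplit : w ^ p = w ^ (p - 1) * w := by rw [← Real.rpow_add_one hw.ne', sub_add_cancel]
  calc p * (a * b ^ (p - 1)) = p * (a * (b / w) ^ (p - 1)) * w ^ (p - 1) := by
        rw [Real.div_rpow hb hw.le]
        field_simp
    _ ≤ (a ^ p + (p - 1) * (b / w) ^ p) * w ^ (p - 1) := by
        gcongr
        exact mul_rpow_sub_one_le_add hp ha (div_nonneg hb hw.le)
    _ = a ^ p * w ^ (p - 1) + (p - 1) * (b ^ p * w⁻¹) := by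
        rw [Real.div_rpow hb hw.le, hsplit]
        field_simp

theorem abs_rpow_sub_two_mul_self_mul_le (p x y : ℝ) :
    |x| ^ (p - 2) * x * y ≤ |x| ^ (p - 1) * |y| := by
  rcases eq_or_ne x 0 with rfl | hx
  · simp only [mul_zero, zero_mul]
    positivity
  · calc |x| ^ (p - 2) * x * y ≤ |x| ^ (p - 2) * (|x| * |y|) := by
          rw [mul_assoc, ← abs_mul]
          gcongr
          exact le_abs_self _
      _ = |x| ^ (p - 1) * |y| := by
          rw [← mul_assoc, ← Real.rpow_add_one (abs_ne_zero.2 hx)]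
          ring_nf

theorem rpow_sub_one_div_mul_rpow {w f : ℝ} (p : ℝ) (hw : 0 < w) (hf : 0 < f) :
    w ^ (p - 1) / (w * f) ^ p = f ^ (-p) * w⁻¹ := by
  rw [Real.mul_rpow hw.le hf.le, Real.rpow_neg hf.le, Real.rpow_sub_one hw.ne']
  field_simp

-- The value `c = 1 - 1/p` maximizes `(p - 1) * (c ^ (p - 1) - c ^ p)`, with maximum `c ^ p`.
theorem hardy_pointwise {p w f : ℝ} (u v : ℝ) (hp : 1 < p) (hw : 0 < w) (hf : 0 < f) :
    (1 - 1 / p) ^ (p - 1) *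
        (p * (f ^ (1 - p) * (|u| ^ (p - 2) * u * v)) - (p - 1) * (f ^ (-p) * |u| ^ p * w⁻¹))
      ≤ |v| ^ p * w ^ (p - 1) - (1 - 1 / p) ^ p * (f ^ (-p) * |u| ^ p * w⁻¹) := by
  have hp₀ : 0 < p := zero_lt_one.trans hp
  have hc : 0 < 1 - 1 / p := sub_pos.2 ((div_lt_one hp₀).2 hp)
  have hpc : p * (1 - 1 / p) = p - 1 := by field_simp
  set c := 1 - 1 / p
  have hexpand : ∀ q : ℝ, (c * |u| / f) ^ q = c ^ q * (f ^ (-q) * |u| ^ q) := fun q => by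
    rw [Real.div_rpow (by positivity) hf.le, Real.mul_rpow hc.le (abs_nonneg u),
      Real.rpow_neg hf.le]
    ring
  have hcp : c ^ p = c ^ (p - 1) * c := by rw [← Real.rpow_add_one hc.ne', sub_add_cancel]
  have hsign : c ^ (p - 1) * (p * (f ^ (1 - p) * (|u| ^ (p - 2) * u * v)))
      ≤ p * (|v| * (c * |u| / f) ^ (p - 1)) :=
    calc c ^ (p - 1) * (p * (f ^ (1 - p) * (|u| ^ (p - 2) * u * v)))
        ≤ c ^ (p - 1) * (p * (f ^ (1 - p) * (|u| ^ (p - 1) * |v|))) := by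
          gcongr c ^ (p - 1) * (p * (f ^ (1 - p) * ?_))
          exact abs_rpow_sub_two_mul_self_mul_le p u v
      _ = p * (|v| * (c * |u| / f) ^ (p - 1)) := by
          rw [hexpand, neg_sub]
          ring
  have hyoung := mul_rpow_sub_one_le_weighted_add (b := c * |u| / f) hp (abs_nonneg v)
    (by positivity) hw
  rw [hexpand p] at hyoung
  have hconst : (p - 1) * c ^ (p - 1) = (p - 1) * c ^ p + c ^ p := by
    linear_combination -p * hcp - c ^ (p - 1) * hpc
  linear_combination hsign + hyoung - f ^ (-p) * |u| ^ p * w⁻¹ * hconst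

theorem hasDerivAt_rpow_mul_abs_rpow {p t f' u' : ℝ} {f u : ℝ → ℝ} (hp : 1 < p)
    (hf : HasDerivAt f f' t) (hft : f t ≠ 0) (hu : HasDerivAt u u' t) :
    HasDerivAt (fun s => f s ^ (1 - p) * |u s| ^ p)
      (p * (f t ^ (1 - p) * (|u t| ^ (p - 2) * u t * u'))
        - (p - 1) * (f t ^ (-p) * |u t| ^ p * f')) t := by
  refine ((hf.rpow_const (p := 1 - p) (Or.inl hft)).mul
    ((hasDerivAt_abs_rpow (u t) hp).comp t hu)).congr_deriv ?_
  rw [show 1 - p - 1 = -p by ring, Function.comp_apply]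
  ring

section VectorValued

variable {E : Type*} [NormedAddCommGroup E] {a b : ℝ}

theorem eventuallyEq_zero_of_hasDerivAt [NormedSpace ℝ E] {u u' : ℝ → E} (hab : a < b)
    (hu' : ∀ t ∈ Ioo a b, HasDerivAt u (u' t) t) (hu₀ : u =ᶠ[𝓝[>] a] 0) :
    u' =ᶠ[𝓝[>] a] 0 := by
  filter_upwards [eventually_eventually_nhdsWithin.2 hu₀, Ioo_mem_nhdsGT hab] with t h₀ ht
  rw [isOpen_Ioi.nhdsWithin_eq ht.1] at h₀
  exact (hu' t ht).unique ((hasDerivAt_const t 0).congr_of_eventuallyEq h₀)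

theorem intervalIntegrable_of_continuousOn_Ioc_of_tendsto {g : ℝ → E} {y : E} (hab : a ≤ b)
    (hg : ContinuousOn g (Ioc a b)) (hlim : Tendsto g (𝓝[>] a) (𝓝 y)) :
    IntervalIntegrable g volume a b := by
  have hupdate : ContinuousOn (Function.update g a y) (Icc a b) := by
    rw [continuousOn_update_iff, Icc_sdiff_left]
    exact ⟨hg, fun _ => hlim.mono_left (nhdsWithin_mono a Ioc_subset_Ioi_self)⟩
  refine (hupdate.intervalIntegrable_of_Icc hab).congr fun t ht => ?_
  rw [uIoc_of_le hab] at ht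
  exact Function.update_of_ne ht.1.ne' y g

end VectorValued

section Interval

variable {a b p : ℝ} {f w u u' : ℝ → ℝ}

theorem continuousOn_rpow_mul_abs_rpow (q : ℝ) (hp : 0 < p)
    (hf : ContinuousOn f (Ioc a b)) (hf_pos : ∀ t ∈ Ioc a b, 0 < f t)
    (hu : ContinuousOn u (Ioc a b)) (hu₀ : u =ᶠ[𝓝[≥] a] 0) :
    ContinuousOn (fun t => f t ^ q * |u t| ^ p) (Icc a b) := by
  intro t ht
  rcases ht.1.eq_or_lt with rfl | hat
  · have hzero : (fun t => f t ^ q * |u t| ^ p) =ᶠ[𝓝[Icc a b] a] fun _ => 0 := by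
      filter_upwards [hu₀.filter_mono (nhdsWithin_mono a Icc_subset_Ici_self)] with s hs
      rw [hs, Pi.zero_apply, abs_zero, Real.zero_rpow hp.ne', mul_zero]
    exact continuousWithinAt_const.congr_of_eventuallyEq_of_mem hzero ht
  · have hIoc : ContinuousOn (fun t => f t ^ q * |u t| ^ p) (Ioc a b) :=
      (hf.rpow_const fun s hs => Or.inl (hf_pos s hs).ne').mul
        (hu.abs.rpow_const fun _ _ => Or.inr hp.le)
    refine (hIoc t ⟨hat, ht.2⟩).mono_of_mem_nhdsWithin ?_
    filter_upwards [self_mem_nhdsWithin, nhdsWithin_le_nhds (Ioi_mem_nhds hat)] with s hs has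
    exact ⟨has, hs.2⟩

theorem hardy_of_hasDerivAt (hab : a < b) (hp : 1 < p) (hw : ∀ t ∈ Ioo a b, 0 < w t)
    (hf : ContinuousOn f (Icc a b)) (hf_pos : ∀ t ∈ Ioc a b, 0 < f t)
    (hf' : ∀ t ∈ Ioo a b, HasDerivAt f (w t)⁻¹ t)
    (hu : ContinuousOn u (Ioc a b)) (hu₀ : u =ᶠ[𝓝[≥] a] 0)
    (hu' : ∀ t ∈ Ioo a b, HasDerivAt u (u' t) t)
    (henergy : IntervalIntegrable (fun t => |u' t| ^ p * w t ^ (p - 1)) volume a b) :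
    (1 - 1 / p) ^ p * (∫ t in a..b, |u t| ^ p * w t ^ (p - 1) / (w t * f t) ^ p)
        + (1 - 1 / p) ^ (p - 1) * (f b ^ (1 - p) * |u b| ^ p)
      ≤ ∫ t in a..b, |u' t| ^ p * w t ^ (p - 1) := by
  have hp₀ : 0 < p := zero_lt_one.trans hp
  have hcont : ∀ q : ℝ, ContinuousOn (fun t => f t ^ q * |u t| ^ p) (Icc a b) := fun q =>
    continuousOn_rpow_mul_abs_rpow q hp₀ (hf.mono Ioc_subset_Icc_self) hf_pos hu hu₀
  have hinv : IntervalIntegrable (fun t => (w t)⁻¹) volume a b :=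
    (intervalIntegrable_iff_integrableOn_Ioc_of_le hab.le).2
      (intervalIntegral.integrableOn_deriv_of_nonneg hf hf' fun t ht => (inv_pos.2 (hw t ht)).le)
  have hpotential : IntervalIntegrable
      (fun t => f t ^ (-p) * |u t| ^ p * (w t)⁻¹) volume a b :=
    hinv.continuousOn_mul (by rw [uIcc_of_le hab.le]; exact hcont (-p))
  have hua : u a = 0 := hu₀.self_of_nhdsWithin self_mem_Ici
  have hftc := intervalIntegral.sub_le_integral_of_hasDeriv_right_of_le hab.le
    (g := fun t => (1 - 1 / p) ^ (p - 1) * (f t ^ (1 - p) * |u t| ^ p))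
    (continuousOn_const.mul (hcont (1 - p)))
    (fun t ht => ((hasDerivAt_rpow_mul_abs_rpow hp (hf' t ht)
      (hf_pos t (Ioo_subset_Ioc_self ht)).ne' (hu' t ht)).const_mul
        ((1 - 1 / p) ^ (p - 1))).hasDerivWithinAt)
    ((intervalIntegrable_iff_integrableOn_Icc_of_le hab.le).1
      (henergy.sub (hpotential.const_mul ((1 - 1 / p) ^ p))))
    (fun t ht => hardy_pointwise (u t) (u' t) hp (hw t ht) (hf_pos t (Ioo_subset_Ioc_self ht)))
  rw [intervalIntegral.integral_sub henergy (hpotential.const_mul _),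
    intervalIntegral.integral_const_mul, hua, abs_zero, Real.zero_rpow hp₀.ne',
    mul_zero, mul_zero, sub_zero] at hftc
  have hpotential_eq : ∫ t in a..b, |u t| ^ p * w t ^ (p - 1) / (w t * f t) ^ p
      = ∫ t in a..b, f t ^ (-p) * |u t| ^ p * (w t)⁻¹ :=
    intervalIntegral.integral_congr_Ioo_of_le hab.le fun t ht => by
      rw [mul_div_assoc,
        rpow_sub_one_div_mul_rpow p (hw t ht) (hf_pos t (Ioo_subset_Ioc_self ht))]
      ring
  rw [hpotential_eq]
  linarith

theorem intervalIntegrable_abs_deriv_rpow_mul_Wp (hab : a < b) (hp : 0 < p)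
    (hw : ContinuousOn w (Ioc a b)) (hw_pos : ∀ t ∈ Ioc a b, 0 < w t)
    (hu₀ : u =ᶠ[𝓝[>] a] 0) (hu' : ∀ t ∈ Ioo a b, HasDerivAt u (u' t) t)
    (hu'c : ContinuousOn u' (Ioc a b)) :
    IntervalIntegrable (fun t => |u' t| ^ p * Wp w p t) volume a b := by
  refine intervalIntegrable_of_continuousOn_Ioc_of_tendsto (y := 0) hab.le
    ((hu'c.abs.rpow_const fun _ _ => Or.inr hp.le).mul
      (hw.rpow_const fun t ht => Or.inl (hw_pos t ht).ne'))
    (tendsto_const_nhds.congr' ?_)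
  filter_upwards [eventuallyEq_zero_of_hasDerivAt hab hu' hu₀] with t ht
  rw [ht, Pi.zero_apply, abs_zero, Real.zero_rpow hp.ne', zero_mul]

end Interval

section Primitive

variable {w : ℝ → ℝ} {t η : ℝ}

theorem fQ_pos (ht : 0 < t) (hw_pos : ∀ s ∈ Ioo 0 t, 0 < w s)
    (hwQ : IntervalIntegrable (fun s => (w s)⁻¹) volume 0 t) : 0 < fQ w t :=
  intervalIntegral.intervalIntegral_pos_of_pos_on hwQ (fun s hs => inv_pos.2 (hw_pos s hs)) ht

theorem continuousOn_fQ (hwQ : IntervalIntegrable (fun s => (w s)⁻¹) volume 0 η) :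
    ContinuousOn (fQ w) (uIcc 0 η) :=
  intervalIntegral.continuousOn_primitive_interval' hwQ left_mem_uIcc

theorem hasDerivAt_fQ (hw_pos : ∀ s ∈ Ioo 0 η, 0 < w s) (hw : ContinuousOn w (Ioo 0 η))
    (hwQ : IntervalIntegrable (fun s => (w s)⁻¹) volume 0 η) (ht : t ∈ Ioo 0 η) :
    HasDerivAt (fQ w) (w t)⁻¹ t := by
  have hcont : ContinuousOn (fun s => (w s)⁻¹) (Ioo 0 η) :=
    hw.inv₀ fun s hs => (hw_pos s hs).ne'
  exact intervalIntegral.integral_hasDerivAt_right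
    (hwQ.mono_set (uIcc_subset_uIcc_left (Icc_subset_uIcc (Ioo_subset_Icc_self ht))))
    (hcont.stronglyMeasurableAtFilter isOpen_Ioo t ht)
    (hcont.continuousAt (isOpen_Ioo.mem_nhds ht))

end Primitive

theorem hardy_Q_general {p η : ℝ} {w u u' : ℝ → ℝ} (hp : 1 < p) (hη : 0 < η)
    (hw_pos : ∀ t ∈ Ioo 0 η, 0 < w t) (hw : ContinuousOn w (Ioo 0 η))
    (hwQ : IntervalIntegrable (fun s => (w s)⁻¹) volume 0 η)
    (hu : ContinuousOn u (Ioc 0 η)) (hu₀ : u =ᶠ[𝓝[≥] 0] 0)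
    (hu' : ∀ t ∈ Ioo 0 η, HasDerivAt u (u' t) t)
    (henergy : IntervalIntegrable (fun t => |u' t| ^ p * Wp w p t) volume 0 η) :
    (∫ t in (0:ℝ)..η, |u' t| ^ p * Wp w p t)
    ≥ (1 - 1 / p) ^ p *
        (∫ t in (0:ℝ)..η, |u t| ^ p * Wp w p t / FQ w t ^ p)
      + ((1 - 1 / p) ^ p) ^ ((p - 1) / p) * fQ w η ^ (1 - p) * |u η| ^ p := by
  have hp₀ : 0 < p := zero_lt_one.trans hp
  have hc : 0 ≤ 1 - 1 / p := (sub_pos.2 ((div_lt_one hp₀).2 hp)).le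
  have hf_pos : ∀ t ∈ Ioc 0 η, 0 < fQ w t := fun t ht =>
    fQ_pos ht.1 (fun s hs => hw_pos s ⟨hs.1, hs.2.trans_le ht.2⟩)
      (hwQ.mono_set (uIcc_subset_uIcc_left (Icc_subset_uIcc (Ioc_subset_Icc_self ht))))
  rw [← Real.rpow_mul hc, mul_div_cancel₀ _ hp₀.ne', mul_assoc]
  exact hardy_of_hasDerivAt hη hp hw_pos (uIcc_of_le hη.le ▸ continuousOn_fQ hwQ) hf_pos
    (fun t ht => hasDerivAt_fQ hw_pos hw hwQ ht) hu hu₀ hu' henergy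

/-- Weighted Hardy inequality with positive boundary term for
`w ∈ Q(ℝ₊)` (i.e. `1/w` integrable near `0`). -/
theorem hardy_Q (p η : ℝ) (hp : 1 < p) (hη : 0 < η)
    (w : ℝ → ℝ)
    (hw_pos : ∀ t, 0 < t → 0 < w t)
    (hw_smooth : ContDiffOn ℝ 1 w (Set.Ioi 0))
    (hw_lim : ∃ a : ENNReal, Filter.Tendsto (fun t => ENNReal.ofReal (w t))
        (nhdsWithin (0:ℝ) (Set.Ioi 0)) (nhds a))
    (hwQ : ∀ b, 0 < b → MeasureTheory.IntegrableOn (fun s => (w s)⁻¹) (Set.Ioo 0 b))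
    (u u' : ℝ → ℝ)
    (hu : ∀ t ∈ Set.Ioc (0:ℝ) η, HasDerivWithinAt u (u' t) (Set.Ioc (0:ℝ) η) t)
    (hu'c : ContinuousOn u' (Set.Ioc (0:ℝ) η))
    (hsupp : ∃ a, 0 < a ∧ ∀ t ≤ a, u t = 0) :
    (∫ t in (0:ℝ)..η, |u' t| ^ p * Wp w p t)
    ≥ (1 - 1 / p) ^ p *
        (∫ t in (0:ℝ)..η, |u t| ^ p * Wp w p t / FQ w t ^ p)
      + ((1 - 1 / p) ^ p) ^ ((p - 1) / p) * fQ w η ^ (1 - p) * |u η| ^ p := by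
  obtain ⟨a, ha, hua⟩ := hsupp
  have hu₀ : u =ᶠ[𝓝 0] 0 := by filter_upwards [Iic_mem_nhds ha] with t ht using hua t ht
  have hu' : ∀ t ∈ Ioo 0 η, HasDerivAt u (u' t) t := fun t ht =>
    (hu t (Ioo_subset_Ioc_self ht)).hasDerivAt (Ioc_mem_nhds ht.1 ht.2)
  have henergy : IntervalIntegrable (fun t => |u' t| ^ p * Wp w p t) volume 0 η :=
    intervalIntegrable_abs_deriv_rpow_mul_Wp hη (zero_lt_one.trans hp)
      (hw_smooth.continuousOn.mono Ioc_subset_Ioi_self) (fun t ht => hw_pos t ht.1)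
      (hu₀.filter_mono nhdsWithin_le_nhds) hu' hu'c
  exact hardy_Q_general hp hη (fun t ht => hw_pos t ht.1)
    (hw_smooth.continuousOn.mono Ioo_subset_Ioi_self)
    ((intervalIntegrable_iff_integrableOn_Ioo_of_le hη.le).2 (hwQ η hη))
    (fun t ht => (hu t ht).continuousWithinAt) (hu₀.filter_mono nhdsWithin_le_nhds) hu' henergy
end
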